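/- Let n ≥ 1, γ > −min(2,n), α > 1 with α ≥ max(1, 1+γ/n), γ/(α−1) ≤ s ≤ n, α ≤ q ≤ ∞, 0 < r ≤ ∞, and assume s/n + 1/q > 0 or (s/n + 1/q = 0 and r = ∞), and s/n + 1/q < 1 or (s/n + 1/q = 1 and r ≤ 1). Assume the single critical condition s/n + 1/q = 1/Q_c < 1/q_c and r ≤ α. Let T > 0, let u₀ be measurable, and let u₁, u₂ be two mild solutions of the Hardy–Hénon equation on (0,T) with the same initial data u₀ such that ess sup_{t∈(0,T)} ‖u_i(t)‖_{K̇^s_{q,r}} < ∞ for i = 1,2. Then u₁(t,x) = u₂(t,x) for almost every (t,x) ∈ (0,T)×ℝⁿ. -/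

import Mathlib

open MeasureTheory Set ENNReal Filter

noncomputable section

abbrev Euc (n : ℕ) : Type := EuclideanSpace ℝ (Fin n)

def annulus (n : ℕ) (j : ℤ) : Set (Euc n) :=
  {x : Euc n | (2 : ℝ) ^ (j - 1) ≤ ‖x‖ ∧ ‖x‖ < (2 : ℝ) ^ j}

def herzNorm (n : ℕ) (s : ℝ) (q r : ℝ≥0∞) (f : Euc n → ℝ) : ℝ≥0∞ :=
  if r = ⊤ then
    ⨆ j : ℤ, ENNReal.ofReal ((2 : ℝ) ^ ((j : ℝ) * s)) *
      eLpNorm ((annulus n j).indicator f) q volume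
  else
    (∑' j : ℤ, (ENNReal.ofReal ((2 : ℝ) ^ ((j : ℝ) * s)) *
      eLpNorm ((annulus n j).indicator f) q volume) ^ r.toReal) ^ (1 / r.toReal)

def heatKernel (n : ℕ) (t : ℝ) (x y : Euc n) : ℝ :=
  (4 * Real.pi * t) ^ (-(n : ℝ) / 2) * Real.exp (-‖x - y‖ ^ 2 / (4 * t))

def heatSemigroup (n : ℕ) (t : ℝ) (f : Euc n → ℝ) (x : Euc n) : ℝ :=
  ∫ y, heatKernel n t x y * f y

def nonlin (n : ℕ) (γ α : ℝ) (v : Euc n → ℝ) (x : Euc n) : ℝ :=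
  ‖x‖ ^ γ * |v x| ^ (α - 1) * v x

/-- `u` is a mild solution of the Hardy–Hénon equation
`∂ₜu - Δu = |x|^γ |u|^{α-1} u` on `(0,T) × ℝⁿ` with initial data `u₀`:
`u` is measurable, and for a.e. `(t,x) ∈ (0,T) × ℝⁿ` the relevant integrals
converge absolutely and the Duhamel formula holds. -/
def IsMildSolution (n : ℕ) (γ α T : ℝ) (u₀ : Euc n → ℝ) (u : ℝ → Euc n → ℝ) : Prop :=
  Measurable (Function.uncurry u) ∧
  ∀ᵐ p : ℝ × Euc n ∂((volume.restrict (Set.Ioo (0 : ℝ) T)).prod volume),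
    (Integrable (fun y => heatKernel n p.1 p.2 y * u₀ y) volume) ∧
    (Integrable (fun z : ℝ × Euc n =>
        heatKernel n (p.1 - z.1) p.2 z.2 * nonlin n γ α (u z.1) z.2)
      ((volume.restrict (Set.Ioo (0 : ℝ) p.1)).prod volume)) ∧
    u p.1 p.2 = heatSemigroup n p.1 u₀ p.2 +
      ∫ z : ℝ × Euc n, heatKernel n (p.1 - z.1) p.2 z.2 * nonlin n γ α (u z.1) z.2
        ∂((volume.restrict (Set.Ioo (0 : ℝ) p.1)).prod volume)


lemma pow_diff_aux {α x y : ℝ} (hα : 1 < α) (hy : 0 ≤ y) (hxy : y ≤ x) :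
    (x ^ (α - 1) - y ^ (α - 1)) * y ≤ (α - 1) * x ^ (α - 1) * (x - y) := by
  rcases eq_or_lt_of_le (hy.trans hxy) with h0 | hx
  · have : y = 0 := by linarith
    subst this; rw [← h0]; simp
  have hz : -1 ≤ y / x - 1 := by
    have : 0 ≤ y / x := by positivity
    linarith
  have hB := one_add_mul_self_le_rpow_one_add hz hα.le
  have e : 1 + (y / x - 1) = y / x := by ring
  rw [e, Real.div_rpow hy hx.le] at hB
  have hxa : x ^ α = x ^ (α - 1) * x := by
    rw [← Real.rpow_add_one hx.ne']; congr 1; ring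
  have hya : y ^ α = y ^ (α - 1) * y := by
    rcases eq_or_lt_of_le hy with h | h
    · rw [← h, Real.zero_rpow (by linarith)]; simp
    rw [← Real.rpow_add_one h.ne']; congr 1; ring
  have hxap : 0 < x ^ α := Real.rpow_pos_of_pos hx _
  rw [le_div_iff₀ hxap] at hB
  rw [hya] at hB
  have : (1 + α * (y / x - 1)) * x ^ α = x ^ (α - 1) * (x + α * (y - x)) := by
    rw [hxa]; field_simp
  rw [this] at hB
  nlinarith

lemma pow_diff {α : ℝ} (hα : 1 < α) (a b : ℝ) :
    |(|a| ^ (α - 1) * a - |b| ^ (α - 1) * b)| ≤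
      α * ((|a| ^ (α - 1) + |b| ^ (α - 1)) * |a - b|) := by
  wlog h : |b| ≤ |a| generalizing a b with H
  · have := H b a (le_of_not_ge h)
    rw [abs_sub_comm, abs_sub_comm a b, add_comm (|a| ^ (α - 1))]; exact this
  have h1 := pow_diff_aux hα (abs_nonneg b) h
  have hm : |b| ^ (α - 1) ≤ |a| ^ (α - 1) :=
    Real.rpow_le_rpow (abs_nonneg b) h (by linarith)
  have hb0 : 0 ≤ |b| ^ (α - 1) := by positivity
  have e : |a| ^ (α - 1) * a - |b| ^ (α - 1) * b
      = |a| ^ (α - 1) * (a - b) + (|a| ^ (α - 1) - |b| ^ (α - 1)) * b := by ring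
  rw [e]
  have h2 := abs_add_le (|a| ^ (α - 1) * (a - b)) ((|a| ^ (α - 1) - |b| ^ (α - 1)) * b)
  rw [abs_mul, abs_mul, abs_of_nonneg (hb0.trans hm), abs_of_nonneg (sub_nonneg.2 hm)] at h2
  have h3 : |a| - |b| ≤ |a - b| := abs_sub_abs_le_abs_sub a b
  have h4 : (α - 1) * |a| ^ (α - 1) * (|a| - |b|) ≤ (α - 1) * |a| ^ (α - 1) * |a - b| := by
    have : 0 ≤ α - 1 := by linarith
    gcongr
  have h5 : 0 ≤ α * (|b| ^ (α - 1) * |a - b|) := by positivity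
  nlinarith

lemma nonlin_diff (n : ℕ) {γ α : ℝ} (hα : 1 < α) (v w : Euc n → ℝ) (x : Euc n) :
    |nonlin n γ α v x - nonlin n γ α w x| ≤
      α * ((‖x‖ ^ γ * |v x| ^ (α - 1) + ‖x‖ ^ γ * |w x| ^ (α - 1)) * |v x - w x|) := by
  unfold nonlin
  have h := pow_diff hα (v x) (w x)
  have hx : 0 ≤ ‖x‖ ^ γ := by positivity
  have := mul_le_mul_of_nonneg_left h hx
  calc _ = ‖x‖ ^ γ * |(|v x| ^ (α - 1) * v x - |w x| ^ (α - 1) * w x)| := by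
        rw [← abs_of_nonneg hx, ← abs_mul, abs_of_nonneg hx]; congr 1; ring
    _ ≤ _ := this
    _ = _ := by ring

/-- singular Gronwall -/
lemma sing_gronwall {T δ : ℝ} (hδ1 : δ < 1) (h : ℝ → ℝ≥0∞)
    (H C : ℝ≥0∞) (hH : H ≠ ⊤) (hC : C ≠ ⊤)
    (hb : ∀ᵐ t ∂(volume.restrict (Set.Ioo (0 : ℝ) T)), h t ≤ H)
    (hi : ∀ᵐ t ∂(volume.restrict (Set.Ioo (0 : ℝ) T)),
      h t ≤ C * ∫⁻ τ in Set.Ioo (0 : ℝ) t, ENNReal.ofReal ((t - τ) ^ (-δ)) * h τ) :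
    ∀ᵐ t ∂(volume.restrict (Set.Ioo (0 : ℝ) T)), h t = 0 := by
  -- choose lambda
  obtain ⟨l, hl, hlC⟩ : ∃ l : ℝ, 0 < l ∧
      C * ENNReal.ofReal ((1 / l) ^ (1 - δ) * Real.Gamma (1 - δ)) ≤ 1 / 2 := by
    have ht : Tendsto (fun l : ℝ => C * ENNReal.ofReal ((1 / l) ^ (1 - δ) * Real.Gamma (1 - δ)))
        atTop (nhds 0) := by
      have h1 : Tendsto (fun l : ℝ => (1 / l) ^ (1 - δ) * Real.Gamma (1 - δ)) atTop (nhds 0) := by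
        have : Tendsto (fun l : ℝ => (1 / l) ^ (1 - δ)) atTop (nhds 0) := by
          have := (tendsto_rpow_neg_atTop (y := 1 - δ) (by linarith))
          refine this.congr' ?_
          filter_upwards [eventually_gt_atTop 0] with l hl
          rw [Real.rpow_neg hl.le, one_div, Real.inv_rpow hl.le]
        simpa using this.mul_const (Real.Gamma (1 - δ))
      have h2 := (ENNReal.tendsto_ofReal h1)
      have h3 := ENNReal.Tendsto.const_mul (a := C) h2 (Or.inr hC)
      simpa using h3
    have := (ht.eventually (gt_mem_nhds (show (0 : ℝ≥0∞) < 1 / 2 by simp))).and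
      (eventually_gt_atTop 0)
    obtain ⟨l, h1, h2⟩ := this.exists
    exact ⟨l, h2, h1.le⟩
  set k : ℝ → ℝ≥0∞ := fun t => ENNReal.ofReal (Real.exp (-(l * t))) * h t with hk
  set M := essSup k (volume.restrict (Set.Ioo (0 : ℝ) T)) with hM
  have hkM : ∀ᵐ t ∂(volume.restrict (Set.Ioo (0 : ℝ) T)), k t ≤ M := ENNReal.ae_le_essSup k
  have hMfin : M ≠ ⊤ := by
    refine ne_top_of_le_ne_top hH ?_
    refine essSup_le_of_ae_le _ ?_
    filter_upwards [hb, ae_restrict_mem measurableSet_Ioo] with t ht ht2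
    have : ENNReal.ofReal (Real.exp (-(l * t))) ≤ 1 := by
      rw [ENNReal.ofReal_le_one, Real.exp_le_one_iff]
      have := mul_pos hl ht2.1
      linarith
    calc k t ≤ 1 * h t := by simp only [hk]; gcongr
      _ ≤ H := by simpa using ht
  have hkM' : ∀ᵐ t, t ∈ Set.Ioo (0 : ℝ) T → k t ≤ M :=
    (ae_restrict_iff' measurableSet_Ioo).1 hkM
  have key : M ≤ 1 / 2 * M := by
    refine essSup_le_of_ae_le _ ?_
    filter_upwards [hi, ae_restrict_mem measurableSet_Ioo] with t ht ht2
    have e1 : ∫⁻ τ in Set.Ioo (0 : ℝ) t, ENNReal.ofReal ((t - τ) ^ (-δ)) * h τ ≤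
        ∫⁻ τ in Set.Ioo (0 : ℝ) t, ENNReal.ofReal (Real.exp (l * t)) *
          (ENNReal.ofReal ((t - τ) ^ (-δ) * Real.exp (-(l * (t - τ)))) * M) := by
      refine lintegral_mono_ae ?_
      filter_upwards [ae_restrict_of_ae hkM', ae_restrict_mem measurableSet_Ioo] with τ h1 h2
      have h3 := h1 ⟨h2.1, h2.2.trans ht2.2⟩
      have hp : 0 ≤ (t - τ) ^ (-δ) := Real.rpow_nonneg (by linarith [h2.2]) _
      have : h τ = ENNReal.ofReal (Real.exp (l * τ)) * k τ := by
        simp only [hk]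
        rw [← mul_assoc, ← ENNReal.ofReal_mul (Real.exp_nonneg _), ← Real.exp_add]; simp
      rw [this]
      calc _ = ENNReal.ofReal ((t - τ) ^ (-δ) * Real.exp (l * τ)) * k τ := by
            rw [ENNReal.ofReal_mul hp, mul_assoc]
        _ ≤ ENNReal.ofReal ((t - τ) ^ (-δ) * Real.exp (l * τ)) * M := by gcongr
        _ = _ := by
            rw [← mul_assoc, ← ENNReal.ofReal_mul (Real.exp_nonneg _)]
            congr 2
            rw [mul_left_comm, ← Real.exp_add]; congr 2; ring
    have e2 : ∫⁻ τ in Set.Ioo (0 : ℝ) t,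
        ENNReal.ofReal ((t - τ) ^ (-δ) * Real.exp (-(l * (t - τ)))) ≤
        ENNReal.ofReal ((1 / l) ^ (1 - δ) * Real.Gamma (1 - δ)) := by
      have hG := Real.integral_rpow_mul_exp_neg_mul_Ioi (a := 1 - δ) (r := l) (by linarith) hl
      have hpos : 0 < (1 / l) ^ (1 - δ) * Real.Gamma (1 - δ) := by
        have := Real.Gamma_pos_of_pos (s := 1 - δ) (by linarith)
        positivity
      rw [← hG, ofReal_integral_eq_lintegral_ofReal]
      · have := lintegral_sub_left_eq_self (μ := volume) (fun σ : ℝ => (Set.Ioo 0 t).indicator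
          (fun σ => ENNReal.ofReal (σ ^ (-δ) * Real.exp (-(l * σ)))) σ) t
        rw [lintegral_indicator measurableSet_Ioo] at this
        have e : ∀ τ, (Set.Ioo 0 t).indicator
          (fun σ => ENNReal.ofReal (σ ^ (-δ) * Real.exp (-(l * σ)))) (t - τ) =
          (Set.Ioo 0 t).indicator
          (fun τ => ENNReal.ofReal ((t - τ) ^ (-δ) * Real.exp (-(l * (t - τ))))) τ := by
          intro τ
          by_cases hτ : τ ∈ Set.Ioo 0 t
          · rw [indicator_of_mem hτ, indicator_of_mem]
            exact ⟨by linarith [hτ.2], by linarith [hτ.1]⟩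
          · rw [indicator_of_notMem hτ, indicator_of_notMem]
            intro h; apply hτ
            exact ⟨by linarith [h.2], by linarith [h.1]⟩
        simp_rw [e] at this
        rw [lintegral_indicator measurableSet_Ioo] at this
        rw [this]
        have e3 : (1 - δ - 1) = -δ := by ring
        rw [e3]
        exact lintegral_mono_set Ioo_subset_Ioi_self
      · by_contra hcon
        rw [integral_undef hcon] at hG
        linarith
      · filter_upwards [ae_restrict_mem measurableSet_Ioi] with x hx
        have : (0 : ℝ) < x := hx
        simp only [Pi.zero_apply]; positivity
    rw [lintegral_const_mul' _ _ ENNReal.ofReal_ne_top, lintegral_mul_const' _ _ hMfin] at e1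
    calc k t ≤ ENNReal.ofReal (Real.exp (-(l * t))) * (C * (ENNReal.ofReal (Real.exp (l * t)) *
          (ENNReal.ofReal ((1 / l) ^ (1 - δ) * Real.Gamma (1 - δ)) * M))) := by
          simp only [hk]
          gcongr
          refine ht.trans ?_
          gcongr
          refine e1.trans ?_
          gcongr
      _ = (ENNReal.ofReal (Real.exp (-(l * t))) * ENNReal.ofReal (Real.exp (l * t))) *
          ((C * ENNReal.ofReal ((1 / l) ^ (1 - δ) * Real.Gamma (1 - δ))) * M) := by ring
      _ ≤ 1 * (1 / 2 * M) := by
          rw [← ENNReal.ofReal_mul (Real.exp_nonneg _), ← Real.exp_add]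
          simp only [neg_add_cancel, Real.exp_zero, ENNReal.ofReal_one]
          gcongr
      _ = _ := by ring
  have hM0 : M = 0 := by
    by_contra hne
    have h2 : 1 / 2 * M < M := by
      rw [one_div, mul_comm, ← div_eq_mul_inv]
      exact ENNReal.half_lt_self hne hMfin
    exact absurd key (not_le.2 h2)
  filter_upwards [hkM] with t ht
  rw [hM0] at ht
  simp only [hk, nonpos_iff_eq_zero, mul_eq_zero, ENNReal.ofReal_eq_zero] at ht
  rcases ht with h | h
  · exact absurd h (not_le.2 (Real.exp_pos _))
  · exact h

lemma heatKernel_nonneg (n : ℕ) {t : ℝ} (ht : 0 < t) (x y : Euc n) : 0 ≤ heatKernel n t x y := by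
  unfold heatKernel; positivity

lemma heatKernel_meas (n : ℕ) :
    Measurable (fun p : ℝ × Euc n × Euc n => heatKernel n p.1 p.2.1 p.2.2) := by
  unfold heatKernel
  fun_prop

lemma lintegral_scale (n : ℕ) {R : ℝ} (hR : 0 < R) (F : Euc n → ℝ≥0∞) (hF : Measurable F) :
    ∫⁻ x, F x = ENNReal.ofReal (R ^ n) * ∫⁻ z, F (R • z) := by
  have h1 : ∫⁻ z, F (R • z) = ∫⁻ x, F x ∂(Measure.map (fun x => R • x) (volume : Measure (Euc n))) := by
    rw [lintegral_map hF (by fun_prop)]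
  rw [h1, Measure.map_addHaar_smul _ hR.ne', lintegral_smul_measure, finrank_euclideanSpace,
    Fintype.card_fin, smul_eq_mul, ← mul_assoc, ← ENNReal.ofReal_mul (by positivity),
    abs_of_nonneg (by positivity), mul_inv_cancel₀ (by positivity)]
  simp

lemma loc_int (n : ℕ) (hn : 1 ≤ n) {c : ℝ} (hc : c < n) :
    ∫⁻ z : Euc n, (Metric.ball (0 : Euc n) 1).indicator
      (fun z => ENNReal.ofReal (‖z‖ ^ (-c))) z ≠ ⊤ := by
  have : Nonempty (Fin n) := ⟨⟨0, hn⟩⟩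
  have h : Integrable (fun z : Euc n => (Set.Iio (1 : ℝ)).indicator (fun y : ℝ => y ^ (-c)) ‖z‖) := by
    rw [integrable_fun_norm_addHaar volume
      (f := (Set.Iio (1 : ℝ)).indicator (fun y : ℝ => y ^ (-c)))]
    have hI : IntegrableOn (fun y : ℝ => y ^ ((n : ℝ) - 1 - c)) (Set.Ioo 0 1) := by
      rw [intervalIntegral.integrableOn_Ioo_rpow_iff zero_lt_one]
      linarith
    have hI2 : Integrable ((Set.Ioo (0 : ℝ) 1).indicator (fun y : ℝ => y ^ ((n : ℝ) - 1 - c))) :=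
      hI.integrable_indicator measurableSet_Ioo
    refine (hI2.integrableOn (s := Set.Ioi 0)).congr_fun ?_ measurableSet_Ioi
    intro y hy
    have hy' : (0 : ℝ) < y := hy
    simp only [finrank_euclideanSpace, Fintype.card_fin, smul_eq_mul]
    by_cases h1 : y < 1
    · rw [indicator_of_mem (show y ∈ Set.Ioo (0 : ℝ) 1 from ⟨hy', h1⟩),
        indicator_of_mem (show y ∈ Set.Iio (1 : ℝ) from h1), ← Real.rpow_natCast,
        ← Real.rpow_add hy']
      congr 1
      push_cast [Nat.cast_sub hn]; ring
    · rw [indicator_of_notMem (fun h => h1 h.2),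
        indicator_of_notMem (show y ∉ Set.Iio (1 : ℝ) from h1)]; simp
  have h2 := h.2.ne
  refine ne_top_of_le_ne_top h2 (lintegral_mono fun z => ?_)
  by_cases hz : z ∈ Metric.ball (0 : Euc n) 1
  · have : ‖z‖ ∈ Set.Iio (1 : ℝ) := by simpa using hz
    beta_reduce
    rw [indicator_of_mem hz, indicator_of_mem this, Real.enorm_eq_ofReal (by positivity)]
  · rw [indicator_of_notMem hz]; simp

lemma kernel_bound (n : ℕ) (hn : 1 ≤ n) {β p : ℝ} (hβ : 0 ≤ β) (hp : 1 ≤ p) (hβp : β * p < n) :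
    ∃ C : ℝ≥0∞, C ≠ ⊤ ∧ ∀ t : ℝ, 0 < t → ∀ y : Euc n,
      eLpNorm (fun x : Euc n => ‖x‖ ^ (-β) * heatKernel n t x y) (ENNReal.ofReal p) volume ≤
        C * ENNReal.ofReal (t ^ (-(n : ℝ) / 2 + n / (2 * p) - β / 2)) := by
  have hp0 : 0 < p := by linarith
  set C1 := ∫⁻ z : Euc n, (Metric.ball (0 : Euc n) 1).indicator
      (fun z => ENNReal.ofReal (‖z‖ ^ (-(β * p)))) z with hC1
  have hC1f : C1 ≠ ⊤ := loc_int n hn hβp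
  set C2 := ∫⁻ z : Euc n, ENNReal.ofReal (Real.exp (-(p / 4) * ‖z‖ ^ 2)) with hC2
  have hC2f : C2 ≠ ⊤ := by
    have h := GaussianFourier.integral_rexp_neg_mul_sq_norm (V := Euc n) (b := p / 4) (by positivity)
    have h_intg : Integrable (fun z : Euc n => Real.exp (-(p / 4) * ‖z‖ ^ 2)) := by
      by_contra hcon
      rw [integral_undef hcon] at h
      have : 0 < (Real.pi / (p / 4)) ^ ((Module.finrank ℝ (Euc n) : ℝ) / 2) := by positivity
      linarith
    exact h_intg.lintegral_lt_top.ne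
  refine ⟨ENNReal.ofReal ((4 * Real.pi) ^ (-(n : ℝ) / 2)) * (C1 + C2) ^ (1 / p), ?_, ?_⟩
  · exact ENNReal.mul_ne_top ENNReal.ofReal_ne_top
      (ENNReal.rpow_ne_top_of_nonneg (by positivity) (ENNReal.add_ne_top.2 ⟨hC1f, hC2f⟩))
  intro t ht y
  set R := Real.sqrt t with hR
  have hR0 : 0 < R := Real.sqrt_pos.2 ht
  have hRt : R = t ^ (1 / 2 : ℝ) := Real.sqrt_eq_rpow t
  rw [eLpNorm_eq_lintegral_rpow_enorm_toReal (by simpa using hp0) ENNReal.ofReal_ne_top,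
    ENNReal.toReal_ofReal hp0.le]
  have hmeas : Measurable (fun x : Euc n => ‖‖x‖ ^ (-β) * heatKernel n t x y‖ₑ ^ p) := by
    unfold heatKernel; fun_prop
  rw [lintegral_scale n hR0 _ hmeas]
  set y' := R⁻¹ • y with hy'
  have hyy : y = R • y' := by rw [hy', smul_smul, mul_inv_cancel₀ hR0.ne', one_smul]
  set A : ℝ := (4 * Real.pi) ^ (-(n : ℝ) / 2) * t ^ (-(n : ℝ) / 2 - β / 2) with hA
  have hA0 : 0 ≤ A := by positivity
  have hpt : ∀ z : Euc n, ‖‖R • z‖ ^ (-β) * heatKernel n t (R • z) y‖ₑ ^ p ≤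
      ENNReal.ofReal (A ^ p) * ((Metric.ball (0 : Euc n) 1).indicator
      (fun z => ENNReal.ofReal (‖z‖ ^ (-(β * p)))) z +
        ENNReal.ofReal (Real.exp (-(p / 4) * ‖z - y'‖ ^ 2))) := by
    intro z
    have e1 : ‖R • z‖ ^ (-β) * heatKernel n t (R • z) y =
        A * (‖z‖ ^ (-β) * Real.exp (-(1 / 4) * ‖z - y'‖ ^ 2)) := by
      unfold heatKernel
      rw [hyy, ← smul_sub, norm_smul, norm_smul, Real.norm_of_nonneg hR0.le,
        Real.mul_rpow hR0.le (norm_nonneg _), Real.mul_rpow (by positivity) ht.le, hA,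
        Real.rpow_sub ht, hRt, ← Real.rpow_mul ht.le]
      have e2 : -(t ^ (1 / 2 : ℝ) * ‖z - y'‖) ^ 2 / (4 * t) = -(1 / 4) * ‖z - y'‖ ^ 2 := by
        rw [mul_pow, ← hRt, hR, Real.sq_sqrt ht.le]; field_simp
      rw [e2]
      have e3 : t ^ (1 / 2 * -β) = (t ^ (β / 2))⁻¹ := by
        rw [← Real.rpow_neg ht.le]; congr 1; ring
      rw [e3]; ring
    have hE : 0 ≤ ‖z‖ ^ (-β) * Real.exp (-(1 / 4) * ‖z - y'‖ ^ 2) := by positivity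
    rw [e1, Real.enorm_eq_ofReal (by positivity), ENNReal.ofReal_rpow_of_nonneg (by positivity) hp0.le,
      Real.mul_rpow hA0 hE, ENNReal.ofReal_mul (by positivity)]
    gcongr
    rw [Real.mul_rpow (by positivity) (Real.exp_nonneg _), ← Real.rpow_mul (norm_nonneg _),
      ← Real.exp_mul]
    have e4 : -(1 / 4) * ‖z - y'‖ ^ 2 * p = -(p / 4) * ‖z - y'‖ ^ 2 := by ring
    have e5 : -β * p = -(β * p) := by ring
    rw [e4, e5]
    by_cases hz : z ∈ Metric.ball (0 : Euc n) 1
    · rw [indicator_of_mem hz]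
      refine le_trans (ENNReal.ofReal_le_ofReal ?_) le_self_add
      refine mul_le_of_le_one_right (by positivity) ?_
      rw [Real.exp_le_one_iff]
      have : 0 ≤ (p / 4) * ‖z - y'‖ ^ 2 := by positivity
      linarith
    · rw [indicator_of_notMem hz, zero_add]
      refine ENNReal.ofReal_le_ofReal ?_
      refine mul_le_of_le_one_left (by positivity) ?_
      have : 1 ≤ ‖z‖ := by simpa using hz
      exact Real.rpow_le_one_of_one_le_of_nonpos this (by nlinarith)
  have hI : ∫⁻ z : Euc n, ‖‖R • z‖ ^ (-β) * heatKernel n t (R • z) y‖ₑ ^ p ≤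
      ENNReal.ofReal (A ^ p) * (C1 + C2) := by
    refine (lintegral_mono hpt).trans ?_
    rw [lintegral_const_mul' _ _ ENNReal.ofReal_ne_top, lintegral_add_right _ (by fun_prop), hC1, hC2,
      lintegral_sub_right_eq_self (fun z : Euc n => ENNReal.ofReal (Real.exp (-(p / 4) * ‖z‖ ^ 2)))]
  calc _ ≤ (ENNReal.ofReal (R ^ n) * (ENNReal.ofReal (A ^ p) * (C1 + C2))) ^ (1 / p) := by
        gcongr
    _ = ENNReal.ofReal ((R ^ n) ^ (1 / p)) * (ENNReal.ofReal A * (C1 + C2) ^ (1 / p)) := by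
        rw [ENNReal.mul_rpow_of_nonneg _ _ (by positivity),
          ENNReal.mul_rpow_of_nonneg _ _ (by positivity),
          ENNReal.ofReal_rpow_of_nonneg (by positivity) (by positivity),
          ENNReal.ofReal_rpow_of_nonneg (by positivity) (by positivity), ← Real.rpow_mul hA0,
          mul_one_div_cancel hp0.ne', Real.rpow_one]
    _ = _ := by
        have : (R ^ n) ^ (1 / p) * A = (4 * Real.pi) ^ (-(n : ℝ) / 2) *
            t ^ (-(n : ℝ) / 2 + n / (2 * p) - β / 2) := by
          rw [hA, hRt, ← Real.rpow_natCast, ← Real.rpow_mul ht.le, ← Real.rpow_mul ht.le,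
            mul_left_comm, ← Real.rpow_add ht]
          congr 2
          field_simp; ring
        rw [← mul_assoc, ← ENNReal.ofReal_mul (by positivity), this,
          ENNReal.ofReal_mul (by positivity)]
        ring

lemma tsum_pow_le (a : ℤ → ℝ≥0∞) {ρ σ : ℝ} (hρ : 0 < ρ) (hσ : ρ ≤ σ) :
    ∑' j, a j ^ σ ≤ ((∑' j, a j ^ ρ) ^ (1 / ρ)) ^ σ := by
  set S := ∑' j, a j ^ ρ with hS
  set N := S ^ (1 / ρ) with hN
  have hNρ : N ^ ρ = S := by
    rw [hN, ← ENNReal.rpow_mul, one_div_mul_cancel hρ.ne', ENNReal.rpow_one]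
  have haN : ∀ j, a j ≤ N := by
    intro j
    have h1 : a j ^ ρ ≤ N ^ ρ := by rw [hNρ]; exact ENNReal.le_tsum j
    exact (ENNReal.rpow_le_rpow_iff hρ).1 h1
  calc ∑' j, a j ^ σ = ∑' j, a j ^ ρ * a j ^ (σ - ρ) := by
        congr 1; ext j
        rw [← ENNReal.rpow_add_of_nonneg _ _ hρ.le (by linarith)]; congr 1; ring
    _ ≤ ∑' j, a j ^ ρ * N ^ (σ - ρ) := by
        refine ENNReal.tsum_le_tsum fun j => ?_
        exact mul_le_mul_right (ENNReal.rpow_le_rpow (haN j) (by linarith)) _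
    _ = N ^ ρ * N ^ (σ - ρ) := by rw [ENNReal.tsum_mul_right, hNρ]
    _ = N ^ σ := by
        rw [← ENNReal.rpow_add_of_nonneg _ _ hρ.le (by linarith)]; congr 1; ring

lemma annulus_meas (n : ℕ) (j : ℤ) : MeasurableSet (annulus n j) := by
  unfold annulus
  exact (measurableSet_le measurable_const measurable_norm).inter
    (measurableSet_lt measurable_norm measurable_const)

lemma annulus_disj (n : ℕ) : Pairwise (Function.onFun Disjoint (annulus n)) := by
  have key : ∀ i j : ℤ, i < j → Disjoint (annulus n i) (annulus n j) := by
    intro i j hij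
    rw [Set.disjoint_left]
    intro x hx hx'
    have h1 : ‖x‖ < (2 : ℝ) ^ i := hx.2
    have h2 : (2 : ℝ) ^ (j - 1) ≤ ‖x‖ := hx'.1
    have h3 : (2 : ℝ) ^ i ≤ (2 : ℝ) ^ (j - 1) := zpow_le_zpow_right₀ (by norm_num) (by omega)
    linarith
  intro i j hij
  rcases lt_or_gt_of_ne hij with h | h
  · exact key i j h
  · exact (key j i h).symm

lemma mem_annulus (n : ℕ) {x : Euc n} (hx : x ≠ 0) : ∃ j, x ∈ annulus n j := by
  obtain ⟨k, hk⟩ := _root_.exists_mem_Ico_zpow (norm_pos_iff.2 hx) (one_lt_two (α := ℝ))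
  exact ⟨k + 1, by simpa using hk.1, hk.2⟩

lemma ae_ne_zero (n : ℕ) (hn : 1 ≤ n) : ∀ᵐ x : Euc n, x ≠ 0 := by
  have : Nonempty (Fin n) := ⟨⟨0, hn⟩⟩
  exact Measure.ae_ne volume 0

lemma lintegral_annuli (n : ℕ) (hn : 1 ≤ n) (F : Euc n → ℝ≥0∞) :
    ∫⁻ x, F x = ∑' j, ∫⁻ x in annulus n j, F x := by
  rw [← lintegral_iUnion (annulus_meas n) (annulus_disj n)]
  have : (⋃ j, annulus n j) =ᵐ[volume] (Set.univ : Set (Euc n)) := by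
    rw [eventuallyEq_univ]
    filter_upwards [ae_ne_zero n hn] with x hx
    exact Set.mem_iUnion.2 (mem_annulus n hx)
  rw [setLIntegral_congr this, setLIntegral_univ]

lemma norm_rpow_annulus (n : ℕ) (s : ℝ) {j : ℤ} {x : Euc n} (hx : x ∈ annulus n j) :
    ‖x‖ ^ s ≤ 2 ^ |s| * (2 : ℝ) ^ ((j : ℝ) * s) := by
  have h1 : (2 : ℝ) ^ (j - 1) ≤ ‖x‖ := hx.1
  have h2 : ‖x‖ < (2 : ℝ) ^ j := hx.2
  rw [← Real.rpow_intCast] at h1 h2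
  have hx0 : 0 < ‖x‖ := lt_of_lt_of_le (by positivity) h1
  rcases le_total 0 s with hs | hs
  · have h3 : (1 : ℝ) ≤ 2 ^ |s| := Real.one_le_rpow (by norm_num) (abs_nonneg _)
    calc ‖x‖ ^ s ≤ ((2 : ℝ) ^ (j : ℝ)) ^ s := Real.rpow_le_rpow hx0.le h2.le hs
      _ = 1 * (2 : ℝ) ^ ((j : ℝ) * s) := by rw [← Real.rpow_mul (by norm_num), one_mul]
      _ ≤ _ := by gcongr
  · calc ‖x‖ ^ s ≤ ((2 : ℝ) ^ ((j - 1 : ℤ) : ℝ)) ^ s :=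
          Real.rpow_le_rpow_of_nonpos (by positivity) h1 hs
      _ = _ := by
          rw [← Real.rpow_mul (by norm_num), ← Real.rpow_add (by norm_num), abs_of_nonpos hs]
          congr 1; push_cast; ring

lemma vol_annulus (n : ℕ) (hn : 1 ≤ n) (j : ℤ) :
    volume (annulus n j) ≤ ENNReal.ofReal ((2 : ℝ) ^ ((j : ℝ) * n)) *
      volume (Metric.ball (0 : Euc n) 1) := by
  have : Nonempty (Fin n) := ⟨⟨0, hn⟩⟩
  have h := Measure.addHaar_ball (volume : Measure (Euc n)) 0 (r := (2 : ℝ) ^ j) (by positivity)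
  rw [finrank_euclideanSpace, Fintype.card_fin] at h
  have e : ((2 : ℝ) ^ j) ^ n = (2 : ℝ) ^ ((j : ℝ) * n) := by
    rw [← Real.rpow_intCast, ← Real.rpow_natCast, ← Real.rpow_mul (by norm_num)]
  rw [← e, ← h]
  refine measure_mono fun x hx => ?_
  simpa using hx.2

lemma herz_weighted (n : ℕ) (hn : 1 ≤ n) (s : ℝ) (q r : ℝ≥0∞) (hr : 0 < r) (hrt : r ≠ ⊤)
    (hrq : r ≤ q) (f : Euc n → ℝ) :
    eLpNorm (fun x => ‖x‖ ^ s * f x) q volume ≤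
      ENNReal.ofReal (2 ^ |s|) * herzNorm n s q r f := by
  have hr' : 0 < r.toReal := ENNReal.toReal_pos hr.ne' hrt
  set a : ℤ → ℝ≥0∞ := fun j => ENNReal.ofReal ((2 : ℝ) ^ ((j : ℝ) * s)) *
      eLpNorm ((annulus n j).indicator f) q volume with ha
  have hN : herzNorm n s q r f = (∑' j, a j ^ r.toReal) ^ (1 / r.toReal) := by
    simp [herzNorm, hrt, ha]
  rw [hN]
  set N := (∑' j, a j ^ r.toReal) ^ (1 / r.toReal) with hNN
  have hpt : ∀ j, ∀ x ∈ annulus n j, ‖‖x‖ ^ s * f x‖ₑ ≤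
      ENNReal.ofReal (2 ^ |s|) * (ENNReal.ofReal ((2 : ℝ) ^ ((j : ℝ) * s)) * ‖f x‖ₑ) := by
    intro j x hx
    rw [enorm_mul, Real.enorm_eq_ofReal (by positivity), ← mul_assoc,
      ← ENNReal.ofReal_mul (by positivity)]
    gcongr
    exact norm_rpow_annulus n s hx
  by_cases hq : q = ⊤
  · subst hq
    have haN : ∀ j, a j ≤ N := by
      intro j
      have h1 : a j ^ r.toReal ≤ N ^ r.toReal := by
        rw [hNN, ← ENNReal.rpow_mul, one_div_mul_cancel hr'.ne', ENNReal.rpow_one]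
        exact ENNReal.le_tsum j
      exact (ENNReal.rpow_le_rpow_iff hr').1 h1
    rw [eLpNorm_exponent_top]
    refine essSup_le_of_ae_le _ ?_
    have hall : ∀ᵐ x : Euc n, ∀ j : ℤ, ‖(annulus n j).indicator f x‖ₑ ≤
        eLpNorm ((annulus n j).indicator f) ⊤ volume := by
      rw [ae_all_iff]; intro j
      rw [eLpNorm_exponent_top]; exact ae_le_eLpNormEssSup
    filter_upwards [hall, ae_ne_zero n hn] with x hx hx0
    obtain ⟨j, hj⟩ := mem_annulus n hx0
    refine (hpt j x hj).trans ?_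
    gcongr
    refine le_trans ?_ (haN j)
    simp only [ha]
    gcongr
    have := hx j
    rwa [indicator_of_mem hj] at this
  · have hq0 : q ≠ 0 := (lt_of_lt_of_le hr hrq).ne'
    have hq' : 0 < q.toReal := ENNReal.toReal_pos hq0 hq
    rw [eLpNorm_eq_lintegral_rpow_enorm_toReal hq0 hq, lintegral_annuli n hn]
    have hj : ∀ j, ∫⁻ x in annulus n j, ‖‖x‖ ^ s * f x‖ₑ ^ q.toReal ≤
        ENNReal.ofReal (2 ^ |s|) ^ q.toReal * a j ^ q.toReal := by
      intro j
      have e : eLpNorm ((annulus n j).indicator f) q volume ^ q.toReal =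
          ∫⁻ x in annulus n j, ‖f x‖ₑ ^ q.toReal := by
        rw [eLpNorm_indicator_eq_eLpNorm_restrict (annulus_meas n j),
          eLpNorm_eq_lintegral_rpow_enorm_toReal hq0 hq, ← ENNReal.rpow_mul,
          one_div_mul_cancel hq'.ne', ENNReal.rpow_one]
      simp only [ha]
      rw [ENNReal.mul_rpow_of_nonneg _ _ hq'.le, e, ← mul_assoc,
        ← ENNReal.mul_rpow_of_nonneg _ _ hq'.le, ← lintegral_const_mul']
      · refine setLIntegral_mono' (annulus_meas n j) fun x hx => ?_
        rw [← ENNReal.mul_rpow_of_nonneg _ _ hq'.le]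
        gcongr
        rw [mul_assoc]
        exact hpt j x hx
      · exact ENNReal.rpow_ne_top_of_nonneg hq'.le
          (ENNReal.mul_ne_top ENNReal.ofReal_ne_top ENNReal.ofReal_ne_top)
    calc _ ≤ (∑' j, ENNReal.ofReal (2 ^ |s|) ^ q.toReal * a j ^ q.toReal) ^ (1 / q.toReal) := by
          gcongr with j; exact hj j
      _ = (ENNReal.ofReal (2 ^ |s|) ^ q.toReal * ∑' j, a j ^ q.toReal) ^ (1 / q.toReal) := by
          rw [ENNReal.tsum_mul_left]
      _ ≤ (ENNReal.ofReal (2 ^ |s|) ^ q.toReal * N ^ q.toReal) ^ (1 / q.toReal) := by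
          gcongr
          exact tsum_pow_le a hr' ((ENNReal.toReal_le_toReal hrt hq).2 hrq)
      _ = _ := by
          rw [← ENNReal.mul_rpow_of_nonneg _ _ hq'.le, ← ENNReal.rpow_mul,
            mul_one_div_cancel hq'.ne', ENNReal.rpow_one]

lemma herz_nonlin (n : ℕ) (hn : 1 ≤ n) (s γ α : ℝ) (hα : 1 < α) (q r : ℝ≥0∞) (hr : 0 < r)
    (hrα : r ≤ ENNReal.ofReal α) (hq : ENNReal.ofReal α ≤ q)
    (hs : s + n * (q⁻¹).toReal = (n + γ) / α) :
    ∃ C : ℝ≥0∞, C ≠ ⊤ ∧ ∀ f : Euc n → ℝ, Measurable f →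
      ∫⁻ x, ENNReal.ofReal (‖x‖ ^ γ) * ‖f x‖ₑ ^ α ≤ C * herzNorm n s q r f ^ α := by
  have hα0 : 0 < α := by linarith
  have hrt : r ≠ ⊤ := ne_top_of_le_ne_top ENNReal.ofReal_ne_top hrα
  have hr' : 0 < r.toReal := ENNReal.toReal_pos hr.ne' hrt
  have hrα' : r.toReal ≤ α := by
    have := ENNReal.toReal_mono ENNReal.ofReal_ne_top hrα
    rwa [ENNReal.toReal_ofReal hα0.le] at this
  set κ := (q⁻¹).toReal with hκ
  have hκα : κ ≤ 1 / α := by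
    have : q⁻¹ ≤ (ENNReal.ofReal α)⁻¹ := ENNReal.inv_le_inv.2 hq
    have h2 := ENNReal.toReal_mono (by simpa using hα0) this
    rw [ENNReal.toReal_inv (ENNReal.ofReal α), ENNReal.toReal_ofReal hα0.le] at h2
    rw [one_div]; exact h2
  set ω := volume (Metric.ball (0 : Euc n) 1) with hω
  have hωt : ω ≠ ⊤ := measure_ball_lt_top.ne
  have he : 0 ≤ 1 / α - κ := by linarith
  refine ⟨ENNReal.ofReal (2 ^ |γ|) * (ω ^ (1 / α - κ)) ^ α, ?_, ?_⟩
  · exact ENNReal.mul_ne_top ENNReal.ofReal_ne_top (ENNReal.rpow_ne_top_of_nonneg hα0.le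
      (ENNReal.rpow_ne_top_of_nonneg he hωt))
  intro f hf
  set a : ℤ → ℝ≥0∞ := fun j => ENNReal.ofReal ((2 : ℝ) ^ ((j : ℝ) * s)) *
      eLpNorm ((annulus n j).indicator f) q volume with ha
  have hN : herzNorm n s q r f = (∑' j, a j ^ r.toReal) ^ (1 / r.toReal) := by
    simp [herzNorm, hrt, ha]
  rw [hN]
  have hj : ∀ j, ∫⁻ x in annulus n j, ENNReal.ofReal (‖x‖ ^ γ) * ‖f x‖ₑ ^ α ≤
      ENNReal.ofReal (2 ^ |γ|) * (ω ^ (1 / α - κ)) ^ α * a j ^ α := by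
    intro j
    set E := eLpNorm ((annulus n j).indicator f) q volume with hE
    have e1 : ∫⁻ x in annulus n j, ‖f x‖ₑ ^ α ≤
        (E * (ENNReal.ofReal ((2 : ℝ) ^ ((j : ℝ) * n)) * ω) ^ (1 / α - κ)) ^ α := by
      have h1 := eLpNorm_le_eLpNorm_mul_rpow_measure_univ (μ := volume.restrict (annulus n j))
        hq hf.aestronglyMeasurable
      rw [Measure.restrict_apply_univ, ← eLpNorm_indicator_eq_eLpNorm_restrict (annulus_meas n j)
        (p := q), ENNReal.toReal_ofReal hα0.le, one_div q.toReal, ← ENNReal.toReal_inv,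
        ← hE, ← hκ, eLpNorm_eq_lintegral_rpow_enorm_toReal (by simpa using hα0)
          ENNReal.ofReal_ne_top, ENNReal.toReal_ofReal hα0.le] at h1
      have h2 := ENNReal.rpow_le_rpow h1 hα0.le
      rw [← ENNReal.rpow_mul, one_div_mul_cancel hα0.ne', ENNReal.rpow_one] at h2
      refine h2.trans ?_
      gcongr
      exact vol_annulus n hn j
    calc _ ≤ ∫⁻ x in annulus n j, ENNReal.ofReal (2 ^ |γ| * (2 : ℝ) ^ ((j : ℝ) * γ)) *
          ‖f x‖ₑ ^ α := by
          refine setLIntegral_mono' (annulus_meas n j) fun x hx => ?_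
          gcongr
          exact norm_rpow_annulus n γ hx
      _ ≤ ENNReal.ofReal (2 ^ |γ| * (2 : ℝ) ^ ((j : ℝ) * γ)) *
          (E * (ENNReal.ofReal ((2 : ℝ) ^ ((j : ℝ) * n)) * ω) ^ (1 / α - κ)) ^ α := by
          rw [lintegral_const_mul' _ _ ENNReal.ofReal_ne_top]
          gcongr
      _ = ENNReal.ofReal (2 ^ |γ|) * (ω ^ (1 / α - κ)) ^ α * ((ENNReal.ofReal ((2 : ℝ) ^ ((j : ℝ) * γ)) *
          ENNReal.ofReal ((2 : ℝ) ^ ((j : ℝ) * n * (1 / α - κ) * α))) * E ^ α) := by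
          rw [ENNReal.mul_rpow_of_nonneg _ _ he, ENNReal.mul_rpow_of_nonneg _ _ hα0.le,
            ENNReal.mul_rpow_of_nonneg _ _ hα0.le, ENNReal.ofReal_mul (by positivity),
            ENNReal.ofReal_rpow_of_nonneg (by positivity) he, ← Real.rpow_mul (by norm_num),
            ENNReal.ofReal_rpow_of_nonneg (by positivity) hα0.le, ← Real.rpow_mul (by norm_num)]
          ring
      _ = _ := by
          rw [← ENNReal.ofReal_mul (by positivity), ← Real.rpow_add (by norm_num)]
          simp only [ha]
          rw [ENNReal.mul_rpow_of_nonneg _ _ hα0.le,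
            ENNReal.ofReal_rpow_of_nonneg (by positivity) hα0.le, ← Real.rpow_mul (by norm_num)]
          congr 5
          have : s = (n + γ) / α - n * κ := by linarith
          rw [this]; field_simp; ring
  rw [lintegral_annuli n hn]
  refine (ENNReal.tsum_le_tsum hj).trans ?_
  rw [ENNReal.tsum_mul_left]
  gcongr
  exact tsum_pow_le a hr' hrα'

lemma potential_bound (n : ℕ) (hn : 1 ≤ n) (s γ α : ℝ) (hγ : -(n : ℝ) < γ) (hα : 1 < α) (q : ℝ≥0∞)
    (hq : ENNReal.ofReal α ≤ q) (hs1 : γ / (α - 1) ≤ s)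
    (hs : s + n * (q⁻¹).toReal = (n + γ) / α) :
    ∃ C : ℝ≥0∞, C ≠ ⊤ ∧ ∀ f : Euc n → ℝ, Measurable f → ∀ t : ℝ, 0 < t → ∀ y : Euc n,
      ∫⁻ x, ENNReal.ofReal (‖x‖ ^ γ * |f x| ^ (α - 1)) * ENNReal.ofReal (heatKernel n t x y) ≤
        C * ENNReal.ofReal (t ^ (-(((α - 1) * (n + γ) / α - γ) / 2))) *
          eLpNorm (fun x => ‖x‖ ^ s * f x) q volume ^ (α - 1) := by
  have hα0 : 0 < α := by linarith
  have hα1 : 0 < α - 1 := by linarith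
  set κ := (q⁻¹).toReal with hκ
  have hκ0 : 0 ≤ κ := ENNReal.toReal_nonneg
  have hq0 : q ≠ 0 := (lt_of_lt_of_le (by simpa using hα0) hq).ne'
  have hκq : q⁻¹ = ENNReal.ofReal κ := (ENNReal.ofReal_toReal (by simpa using hq0)).symm
  have hκα : κ ≤ 1 / α := by
    have : q⁻¹ ≤ (ENNReal.ofReal α)⁻¹ := ENNReal.inv_le_inv.2 hq
    have h2 := ENNReal.toReal_mono (by simpa using hα0) this
    rw [ENNReal.toReal_inv (ENNReal.ofReal α), ENNReal.toReal_ofReal hα0.le] at h2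
    rw [one_div]; exact h2
  have hακ : α * κ ≤ 1 := by rw [le_div_iff₀ hα0] at hκα; linarith
  have hd0 : 0 < 1 - (α - 1) * κ := by
    rcases eq_or_lt_of_le hκ0 with h | h
    · rw [← h]; norm_num
    · nlinarith
  have hd1 : 1 - (α - 1) * κ ≤ 1 := by nlinarith
  set p := 1 / (1 - (α - 1) * κ) with hp
  have hp1 : 1 ≤ p := by rw [hp, le_div_iff₀ hd0]; linarith
  set b := (α - 1) * s - γ with hb
  have hb0 : 0 ≤ b := by
    rw [div_le_iff₀ hα1] at hs1; rw [hb]; linarith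
  have hs' : s = (n + γ) / α - n * κ := by linarith
  have hbp : b * p < n := by
    rw [hp, mul_one_div, div_lt_iff₀ hd0, hb, hs']
    have e : (α - 1) * ((n + γ) / α - n * κ) - γ = n * (1 - (α - 1) * κ) - (n + γ) / α := by
      field_simp; ring
    rw [e]
    have : 0 < (n + γ) / α := div_pos (by linarith) hα0
    linarith
  obtain ⟨C, hC, hK⟩ := kernel_bound n hn hb0 hp1 hbp
  refine ⟨C, hC, ?_⟩
  intro f hf t ht y
  set m := q * (ENNReal.ofReal (α - 1))⁻¹ with hm
  have ha0 : ENNReal.ofReal (α - 1) ≠ 0 := by simpa using hα1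
  have hmm : m * ENNReal.ofReal (α - 1) = q := by
    rw [hm, mul_assoc, ENNReal.inv_mul_cancel ha0 ENNReal.ofReal_ne_top, mul_one]
  have hminv : m⁻¹ = ENNReal.ofReal ((α - 1) * κ) := by
    rw [hm, ENNReal.mul_inv (Or.inl hq0) (Or.inr (by simp)), inv_inv, hκq,
      ← ENNReal.ofReal_mul hκ0, mul_comm]
  have hpinv : (ENNReal.ofReal p)⁻¹ = ENNReal.ofReal (1 - (α - 1) * κ) := by
    rw [← ENNReal.ofReal_inv_of_pos (by linarith), hp, one_div, inv_inv]
  have hHol : ENNReal.HolderTriple m (ENNReal.ofReal p) 1 := by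
    constructor
    rw [hminv, hpinv, ← ENNReal.ofReal_add (by positivity) hd0.le]
    simp
  have hH := eLpNorm_smul_le_mul_eLpNorm (μ := (volume : Measure (Euc n)))
    (p := m) (q := ENNReal.ofReal p) (r := 1)
    (f := fun x : Euc n => ‖x‖ ^ (-b) * heatKernel n t x y)
    (φ := fun x : Euc n => ‖‖x‖ ^ s * f x‖ ^ (α - 1))
    (by refine Measurable.aestronglyMeasurable ?_; unfold heatKernel; fun_prop)
    (by refine Measurable.aestronglyMeasurable ?_; fun_prop)
  rw [eLpNorm_norm_rpow _ hα1, hmm, eLpNorm_one_eq_lintegral_enorm] at hH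
  have hexp : -(n : ℝ) / 2 + n / (2 * p) - b / 2 = -(((α - 1) * (n + γ) / α - γ) / 2) := by
    have : (n : ℝ) / (2 * p) = n * (1 - (α - 1) * κ) / 2 := by
      rw [hp]; field_simp
    rw [this, hb, hs']; field_simp; ring
  have hKt := hK t ht y
  rw [hexp] at hKt
  calc _ ≤ ∫⁻ x, ‖((fun x : Euc n => ‖‖x‖ ^ s * f x‖ ^ (α - 1)) •
        (fun x : Euc n => ‖x‖ ^ (-b) * heatKernel n t x y)) x‖ₑ := by
        refine lintegral_mono_ae ?_
        filter_upwards [ae_ne_zero n hn] with x hx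
        have hx0 : 0 < ‖x‖ := norm_pos_iff.2 hx
        have hk0 := heatKernel_nonneg n ht x y
        rw [← ENNReal.ofReal_mul (by positivity), Real.enorm_eq_ofReal_abs]
        refine ENNReal.ofReal_le_ofReal (le_trans (le_of_eq ?_) (le_abs_self _))
        simp only [Pi.smul_apply', smul_eq_mul]
        rw [norm_mul, Real.norm_of_nonneg (by positivity : 0 ≤ ‖x‖ ^ s), Real.norm_eq_abs,
          Real.mul_rpow (by positivity) (abs_nonneg _), ← Real.rpow_mul hx0.le]
        have : ‖x‖ ^ γ = ‖x‖ ^ (s * (α - 1)) * ‖x‖ ^ (-b) := by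
          rw [← Real.rpow_add hx0]; congr 1; rw [hb]; ring
        rw [this]; ring
    _ ≤ _ := hH
    _ ≤ _ := by
        rw [mul_comm]
        gcongr

lemma pow_cross {α a b c : ℝ} (hα : 1 < α) (ha : 0 ≤ a) (hb : 0 ≤ b) (hc : c ≤ a + b) :
    (a ^ (α - 1) + b ^ (α - 1)) * c ≤ 4 * (a ^ α + b ^ α) := by
  have key : ∀ x y : ℝ, 0 ≤ x → 0 ≤ y → y ≤ x →
      (x ^ (α - 1) + y ^ (α - 1)) * (x + y) ≤ 4 * (x ^ α + y ^ α) := by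
    intro x y hx hy hxy
    have h1 : y ^ (α - 1) ≤ x ^ (α - 1) := Real.rpow_le_rpow hy hxy (by linarith)
    have h2 : 0 ≤ y ^ (α - 1) := by positivity
    have h3 : x ^ (α - 1) * x = x ^ α := by
      rcases eq_or_lt_of_le hx with h | h
      · rw [← h, Real.zero_rpow (by linarith : α ≠ 0)]; simp
      rw [← Real.rpow_add_one h.ne']; congr 1; ring
    have h4 : 0 ≤ y ^ α := by positivity
    calc _ ≤ (x ^ (α - 1) + x ^ (α - 1)) * (x + x) := by gcongr
      _ = 4 * x ^ α := by rw [← h3]; ring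
      _ ≤ _ := by linarith
  have h0 : (a ^ (α - 1) + b ^ (α - 1)) * c ≤ (a ^ (α - 1) + b ^ (α - 1)) * (a + b) := by
    gcongr
  refine h0.trans ?_
  rcases le_total b a with h | h
  · exact key a b ha hb h
  · have := key b a hb ha h
    linarith

/-- the potential -/
def pot (n : ℕ) (γ α : ℝ) (f : Euc n → ℝ) (x : Euc n) : ℝ≥0∞ :=
  ENNReal.ofReal (‖x‖ ^ γ * |f x| ^ (α - 1))

def gfun (n : ℕ) (γ α : ℝ) (u₁ u₂ : ℝ → Euc n → ℝ) (z : ℝ × Euc n) : ℝ≥0∞ :=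
  (pot n γ α (u₁ z.1) z.2 + pot n γ α (u₂ z.1) z.2) * ‖u₁ z.1 z.2 - u₂ z.1 z.2‖ₑ

lemma pot_meas (n : ℕ) (γ α : ℝ) {u : ℝ → Euc n → ℝ} (hu : Measurable (Function.uncurry u)) :
    Measurable (fun z : ℝ × Euc n => pot n γ α (u z.1) z.2) := by
  unfold pot
  have : Measurable (fun z : ℝ × Euc n => u z.1 z.2) := hu
  have h2 : Measurable (fun z : ℝ × Euc n => |u z.1 z.2|) := measurable_norm.comp this
  fun_prop

lemma gfun_meas (n : ℕ) (γ α : ℝ) {u₁ u₂ : ℝ → Euc n → ℝ}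
    (h₁ : Measurable (Function.uncurry u₁)) (h₂ : Measurable (Function.uncurry u₂)) :
    Measurable (gfun n γ α u₁ u₂) := by
  unfold gfun
  have a1 : Measurable (fun z : ℝ × Euc n => u₁ z.1 z.2) := h₁
  have a2 : Measurable (fun z : ℝ × Euc n => u₂ z.1 z.2) := h₂
  exact ((pot_meas n γ α h₁).add (pot_meas n γ α h₂)).mul (a1.sub a2).enorm

lemma fst_mem (n : ℕ) (t : ℝ) :
    ∀ᵐ z : ℝ × Euc n ∂((volume.restrict (Set.Ioo (0 : ℝ) t)).prod volume),
      z.1 ∈ Set.Ioo (0 : ℝ) t :=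
  Measure.quasiMeasurePreserving_fst.ae (ae_restrict_mem measurableSet_Ioo)

lemma duhamel_diff (n : ℕ) {γ α T : ℝ} (hα : 1 < α) {u₀ : Euc n → ℝ} {u₁ u₂ : ℝ → Euc n → ℝ}
    (h₁ : IsMildSolution n γ α T u₀ u₁) (h₂ : IsMildSolution n γ α T u₀ u₂) :
    ∀ᵐ p : ℝ × Euc n ∂((volume.restrict (Set.Ioo (0 : ℝ) T)).prod volume),
      ‖u₁ p.1 p.2 - u₂ p.1 p.2‖ₑ ≤ ENNReal.ofReal α *
        ∫⁻ z, ENNReal.ofReal (heatKernel n (p.1 - z.1) p.2 z.2) * gfun n γ α u₁ u₂ z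
          ∂((volume.restrict (Set.Ioo (0 : ℝ) p.1)).prod volume) := by
  filter_upwards [h₁.2, h₂.2] with p ⟨_, i1, e1⟩ ⟨_, i2, e2⟩
  rw [e1, e2, add_sub_add_left_eq_sub, ← integral_sub i1 i2]
  refine (enorm_integral_le_lintegral_enorm _).trans ?_
  rw [← lintegral_const_mul' _ _ ENNReal.ofReal_ne_top]
  refine lintegral_mono_ae ?_
  filter_upwards [fst_mem n p.1] with z hz
  have hk := heatKernel_nonneg n (sub_pos.2 hz.2) p.2 z.2
  have hd := nonlin_diff n (γ := γ) hα (u₁ z.1) (u₂ z.1) z.2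
  rw [← mul_sub, enorm_mul, Real.enorm_eq_ofReal hk, mul_left_comm]
  gcongr
  rw [Real.enorm_eq_ofReal_abs, gfun, pot, pot, ← ENNReal.ofReal_add (by positivity) (by positivity),
    Real.enorm_eq_ofReal_abs, ← ENNReal.ofReal_mul (by positivity),
    ← ENNReal.ofReal_mul (by positivity)]
  exact ENNReal.ofReal_le_ofReal hd

lemma gfun_le (n : ℕ) {γ α : ℝ} (hα : 1 < α) (u₁ u₂ : ℝ → Euc n → ℝ) (t : ℝ) (x : Euc n) :
    gfun n γ α u₁ u₂ (t, x) ≤ 4 * (ENNReal.ofReal (‖x‖ ^ γ) * ‖u₁ t x‖ₑ ^ α +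
      ENNReal.ofReal (‖x‖ ^ γ) * ‖u₂ t x‖ₑ ^ α) := by
  have hα0 : 0 ≤ α := by linarith
  have h := pow_cross hα (abs_nonneg (u₁ t x)) (abs_nonneg (u₂ t x)) (abs_sub (u₁ t x) (u₂ t x))
  have hx : 0 ≤ ‖x‖ ^ γ := by positivity
  have h' := mul_le_mul_of_nonneg_left h hx
  have e4 : (4 : ℝ≥0∞) = ENNReal.ofReal 4 := by simp
  rw [gfun, pot, pot, ← ENNReal.ofReal_add (by positivity) (by positivity),
    Real.enorm_eq_ofReal_abs, Real.enorm_eq_ofReal_abs, Real.enorm_eq_ofReal_abs,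
    ← ENNReal.ofReal_mul (by positivity), ENNReal.ofReal_rpow_of_nonneg (abs_nonneg _) hα0,
    ENNReal.ofReal_rpow_of_nonneg (abs_nonneg _) hα0, ← ENNReal.ofReal_mul hx,
    ← ENNReal.ofReal_mul hx, ← ENNReal.ofReal_add (by positivity) (by positivity), e4,
    ← ENNReal.ofReal_mul (by norm_num)]
  refine ENNReal.ofReal_le_ofReal ?_
  simp only
  linarith


lemma tonelli_step {X Z : Type*} [MeasurableSpace X] [MeasurableSpace Z] (μ : Measure X) [SFinite μ]
    (ν : Measure Z) [SFinite ν] (V : X → ℝ≥0∞) (K : X → Z → ℝ≥0∞) (g : Z → ℝ≥0∞) (a : ℝ≥0∞)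
    (ha : a ≠ ⊤) (hV : Measurable V) (hK : Measurable (fun w : X × Z => K w.1 w.2))
    (hg : Measurable g) :
    ∫⁻ x, V x * (a * ∫⁻ z, K x z * g z ∂ν) ∂μ = a * ∫⁻ z, (∫⁻ x, V x * K x z ∂μ) * g z ∂ν := by
  have hK1 : ∀ x, Measurable (K x) := fun x => hK.comp (measurable_prodMk_left (x := x))
  have hK2 : ∀ z, Measurable (fun x => K x z) := fun z => hK.comp (measurable_prodMk_right (y := z))
  have e1 : ∀ x, V x * (a * ∫⁻ z, K x z * g z ∂ν) = a * ∫⁻ z, V x * K x z * g z ∂ν := by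
    intro x
    have hm : Measurable (fun z => K x z * g z) := (hK1 x).mul hg
    rw [mul_left_comm, ← lintegral_const_mul _ hm]
    simp only [mul_assoc]
  have e2 : ∀ z, (∫⁻ x, V x * K x z ∂μ) * g z = ∫⁻ x, V x * K x z * g z ∂μ := by
    intro z
    have hm : Measurable (fun x => V x * K x z) := hV.mul (hK2 z)
    rw [lintegral_mul_const _ hm]
  simp_rw [e1, e2]
  rw [lintegral_const_mul' _ _ ha, lintegral_lintegral_swap]
  exact (((hV.comp measurable_fst).mul hK).mul (hg.comp measurable_snd)).aemeasurable

lemma kernel_meas_prod (n : ℕ) (t : ℝ) : Measurable (fun w : Euc n × (ℝ × Euc n) =>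
      ENNReal.ofReal (heatKernel n (t - w.2.1) w.1 w.2.2)) := by
  have hf : Measurable (fun w : Euc n × (ℝ × Euc n) =>
      ((t - w.2.1, w.1, w.2.2) : ℝ × Euc n × Euc n)) := by
    refine Measurable.prodMk ?_ (Measurable.prodMk measurable_fst ?_)
    · exact measurable_const.sub (measurable_fst.comp measurable_snd)
    · exact measurable_snd.comp measurable_snd
  exact ENNReal.measurable_ofReal.comp ((heatKernel_meas n).comp hf)

lemma pot_meas_slice (n : ℕ) (γ α : ℝ) {u : ℝ → Euc n → ℝ}
    (hu : Measurable (Function.uncurry u)) (t : ℝ) : Measurable (pot n γ α (u t)) := by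
  have := (pot_meas n γ α hu).comp (measurable_prodMk_left (x := t))
  exact this

lemma step_abs (n : ℕ) (t δ : ℝ) (a E : ℝ≥0∞) (ha : a ≠ ⊤) (hEt : E ≠ ⊤)
    (V₁ V₂ : Euc n → ℝ≥0∞) (K : Euc n → ℝ × Euc n → ℝ≥0∞) (g : ℝ × Euc n → ℝ≥0∞)
    (hV₁ : Measurable V₁) (hV₂ : Measurable V₂)
    (hK : Measurable (fun w : Euc n × (ℝ × Euc n) => K w.1 w.2)) (hg : Measurable g)
    (hE : ∀ z : ℝ × Euc n, z.1 ∈ Set.Ioo (0 : ℝ) t →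
      (∫⁻ x, V₁ x * K x z) + (∫⁻ x, V₂ x * K x z) ≤ E * ENNReal.ofReal ((t - z.1) ^ (-δ))) :
    ∫⁻ x, (V₁ x + V₂ x) * (a * ∫⁻ z, K x z * g z
          ∂((volume.restrict (Set.Ioo (0 : ℝ) t)).prod volume)) ≤
      (a * E) * ∫⁻ τ in Set.Ioo (0 : ℝ) t, ENNReal.ofReal ((t - τ) ^ (-δ)) *
        ∫⁻ x, g (τ, x) := by
  have hV : Measurable (fun x => V₁ x + V₂ x) := hV₁.add hV₂
  rw [tonelli_step volume _ (fun x => V₁ x + V₂ x) K g a ha hV hK hg, mul_assoc]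
  refine mul_le_mul_right ?_ _
  have hin : ∀ z : ℝ × Euc n, z.1 ∈ Set.Ioo (0 : ℝ) t →
      ∫⁻ x, (V₁ x + V₂ x) * K x z ≤ E * ENNReal.ofReal ((t - z.1) ^ (-δ)) := by
    intro z hz
    have hKm1 : Measurable (fun x : Euc n => K x z) :=
      hK.comp (measurable_prodMk_right (y := z))
    refine le_trans (le_of_eq ?_) (hE z hz)
    have hm : Measurable (fun x => V₁ x * K x z) := hV₁.mul hKm1
    rw [← lintegral_add_left hm]
    simp only [add_mul]
  have h2 : Measurable (fun z : ℝ × Euc n => ENNReal.ofReal ((t - z.1) ^ (-δ)) * g z) := by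
    have : Measurable (fun z : ℝ × Euc n => ENNReal.ofReal ((t - z.1) ^ (-δ))) := by fun_prop
    exact this.mul hg
  calc _ ≤ ∫⁻ z, E * (ENNReal.ofReal ((t - z.1) ^ (-δ)) * g z)
        ∂((volume.restrict (Set.Ioo (0 : ℝ) t)).prod volume) := by
        refine lintegral_mono_ae ?_
        filter_upwards [fst_mem n t] with z hz
        rw [← mul_assoc]
        exact mul_le_mul_left (hin z hz) _
    _ = _ := by
        rw [lintegral_const_mul' _ _ hEt, lintegral_prod _ h2.aemeasurable]
        congr 2; ext τ
        simp only
        rw [lintegral_const_mul' _ _ ENNReal.ofReal_ne_top]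

lemma step_bound (n : ℕ) {γ α : ℝ} {u₁ u₂ : ℝ → Euc n → ℝ}
    (h₁ : Measurable (Function.uncurry u₁)) (h₂ : Measurable (Function.uncurry u₂))
    (t δ : ℝ) (E : ℝ≥0∞) (hEt : E ≠ ⊤)
    (hE : ∀ τ ∈ Set.Ioo (0 : ℝ) t, ∀ y : Euc n,
      (∫⁻ x, pot n γ α (u₁ t) x * ENNReal.ofReal (heatKernel n (t - τ) x y)) +
      (∫⁻ x, pot n γ α (u₂ t) x * ENNReal.ofReal (heatKernel n (t - τ) x y)) ≤
        E * ENNReal.ofReal ((t - τ) ^ (-δ)))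
    (hdt : ∀ᵐ x : Euc n, ‖u₁ t x - u₂ t x‖ₑ ≤ ENNReal.ofReal α *
        ∫⁻ z, ENNReal.ofReal (heatKernel n (t - z.1) x z.2) * gfun n γ α u₁ u₂ z
          ∂((volume.restrict (Set.Ioo (0 : ℝ) t)).prod volume)) :
    ∫⁻ x, gfun n γ α u₁ u₂ (t, x) ≤ (ENNReal.ofReal α * E) *
      ∫⁻ τ in Set.Ioo (0 : ℝ) t, ENNReal.ofReal ((t - τ) ^ (-δ)) *
        ∫⁻ x, gfun n γ α u₁ u₂ (τ, x) := by
  have hgm : Measurable (gfun n γ α u₁ u₂) := gfun_meas n γ α h₁ h₂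
  have hVm₁ : Measurable (pot n γ α (u₁ t)) := pot_meas_slice n γ α h₁ t
  have hVm₂ : Measurable (pot n γ α (u₂ t)) := pot_meas_slice n γ α h₂ t
  have hKm := kernel_meas_prod n t
  have hle : ∫⁻ x, gfun n γ α u₁ u₂ (t, x) ≤
      ∫⁻ x, (pot n γ α (u₁ t) x + pot n γ α (u₂ t) x) * (ENNReal.ofReal α *
        ∫⁻ z, ENNReal.ofReal (heatKernel n (t - z.1) x z.2) * gfun n γ α u₁ u₂ z
          ∂((volume.restrict (Set.Ioo (0 : ℝ) t)).prod volume)) := by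
    refine lintegral_mono_ae ?_
    filter_upwards [hdt] with x hx
    exact mul_le_mul_right hx _
  refine hle.trans ?_
  exact step_abs n t δ _ E ENNReal.ofReal_ne_top hEt (pot n γ α (u₁ t)) (pot n γ α (u₂ t))
    (fun x z => ENNReal.ofReal (heatKernel n (t - z.1) x z.2)) _ hVm₁ hVm₂ hKm hgm
    (fun z hz => hE z.1 hz z.2)
/-- Unconditional uniqueness for the Hardy–Hénon equation in the single critical case I:
`s/n + 1/q = 1/Q_c < 1/q_c` and `r ≤ α`, where `1/q_c = (2+γ)/(n(α-1))` and
`1/Q_c = (n+γ)/(nα)`. -/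
theorem uniqueness_single_critical_I
    (n : ℕ) (hn : 1 ≤ n) (γ α s T : ℝ) (q r : ℝ≥0∞)
    (hγ : -(min 2 (n : ℝ)) < γ) (hα : 1 < α)
    (hα' : max 1 (1 + γ / (n : ℝ)) ≤ α)
    (hs1 : γ / (α - 1) ≤ s) (hs2 : s ≤ (n : ℝ))
    (hq : ENNReal.ofReal α ≤ q) (hr : 0 < r)
    (hwd1 : 0 < s / (n : ℝ) + (q⁻¹).toReal ∨
      (s / (n : ℝ) + (q⁻¹).toReal = 0 ∧ r = ⊤))
    (hwd2 : s / (n : ℝ) + (q⁻¹).toReal < 1 ∨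
      (s / (n : ℝ) + (q⁻¹).toReal = 1 ∧ r ≤ 1))
    (hcrit : s / (n : ℝ) + (q⁻¹).toReal = ((n : ℝ) + γ) / ((n : ℝ) * α))
    (hlt : ((n : ℝ) + γ) / ((n : ℝ) * α) < (2 + γ) / ((n : ℝ) * (α - 1)))
    (hrα : r ≤ ENNReal.ofReal α)
    (hT : 0 < T) (u₀ : Euc n → ℝ) (hu₀ : Measurable u₀)
    (u₁ u₂ : ℝ → Euc n → ℝ)
    (h₁ : IsMildSolution n γ α T u₀ u₁) (h₂ : IsMildSolution n γ α T u₀ u₂)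
    (hb₁ : essSup (fun t => herzNorm n s q r (u₁ t)) (volume.restrict (Set.Ioo (0 : ℝ) T)) < ⊤)
    (hb₂ : essSup (fun t => herzNorm n s q r (u₂ t)) (volume.restrict (Set.Ioo (0 : ℝ) T)) < ⊤) :
    ∀ᵐ p : ℝ × Euc n ∂((volume.restrict (Set.Ioo (0 : ℝ) T)).prod volume),
      u₁ p.1 p.2 = u₂ p.1 p.2 := by
  have hn0 : (0 : ℝ) < n := by exact_mod_cast hn
  have hα0 : 0 < α := by linarith
  have hα1 : 0 < α - 1 := by linarith
  have hγ2 : -(n : ℝ) < γ := lt_of_le_of_lt (neg_le_neg (min_le_right _ _)) hγ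
  have hs : s + n * (q⁻¹).toReal = (n + γ) / α := by
    have : n * (s / (n : ℝ) + (q⁻¹).toReal) = n * (((n : ℝ) + γ) / ((n : ℝ) * α)) := by rw [hcrit]
    rw [mul_add, mul_div_cancel₀ _ hn0.ne'] at this
    rw [this]; field_simp
  set δ := ((α - 1) * (n + γ) / α - γ) / 2 with hδ
  have hδ1 : δ < 1 := by
    rw [div_lt_div_iff₀ (by positivity) (by positivity)] at hlt
    have h1 : ((n : ℝ) + γ) * (α - 1) < (2 + γ) * α := by
      have : (n : ℝ) * (((n : ℝ) + γ) * (α - 1)) < n * ((2 + γ) * α) := by linarith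
      exact lt_of_mul_lt_mul_left this hn0.le
    have h2 : (α - 1) * (n + γ) / α < 2 + γ := by
      rw [div_lt_iff₀ hα0]; linarith
    rw [hδ]; linarith
  have hrt : r ≠ ⊤ := ne_top_of_le_ne_top ENNReal.ofReal_ne_top hrα
  set μ := volume.restrict (Set.Ioo (0 : ℝ) T) with hμ
  obtain ⟨B₁, hB₁⟩ : ∃ B, B = essSup (fun t => herzNorm n s q r (u₁ t)) μ := ⟨_, rfl⟩
  obtain ⟨B₂, hB₂⟩ : ∃ B, B = essSup (fun t => herzNorm n s q r (u₂ t)) μ := ⟨_, rfl⟩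
  have hB₁a : ∀ᵐ t ∂μ, herzNorm n s q r (u₁ t) ≤ B₁ := by
    rw [hB₁]; exact ENNReal.ae_le_essSup _
  have hB₂a : ∀ᵐ t ∂μ, herzNorm n s q r (u₂ t) ≤ B₂ := by
    rw [hB₂]; exact ENNReal.ae_le_essSup _
  rw [← hB₁] at hb₁
  rw [← hB₂] at hb₂
  obtain ⟨Cn, hCn, hnl⟩ := herz_nonlin n hn s γ α hα q r hr hrα hq hs
  obtain ⟨Cp, hCp, hpot⟩ := potential_bound n hn s γ α hγ2 hα q hq hs1 hs
  have hm₁ : Measurable (fun z : ℝ × Euc n => u₁ z.1 z.2) := h₁.1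
  have hm₂ : Measurable (fun z : ℝ × Euc n => u₂ z.1 z.2) := h₂.1
  have hm₁t : ∀ t, Measurable (u₁ t) := fun t => hm₁.comp measurable_prodMk_left
  have hm₂t : ∀ t, Measurable (u₂ t) := fun t => hm₂.comp measurable_prodMk_left
  set g := gfun n γ α u₁ u₂ with hg
  have hgm : Measurable g := gfun_meas n γ α h₁.1 h₂.1
  set h : ℝ → ℝ≥0∞ := fun t => ∫⁻ x, g (t, x) with hh
  have hdu := duhamel_diff n hα h₁ h₂
  have hdu' := Measure.ae_ae_of_ae_prod hdu
  have hbd : ∀ᵐ t ∂μ, h t ≤ 4 * (Cn * B₁ ^ α + Cn * B₂ ^ α) := by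
    filter_upwards [hB₁a, hB₂a] with t ht1 ht2
    calc h t ≤ ∫⁻ x, 4 * (ENNReal.ofReal (‖x‖ ^ γ) * ‖u₁ t x‖ₑ ^ α +
          ENNReal.ofReal (‖x‖ ^ γ) * ‖u₂ t x‖ₑ ^ α) := lintegral_mono fun x => gfun_le n hα u₁ u₂ t x
      _ = 4 * ((∫⁻ x, ENNReal.ofReal (‖x‖ ^ γ) * ‖u₁ t x‖ₑ ^ α) +
          (∫⁻ x, ENNReal.ofReal (‖x‖ ^ γ) * ‖u₂ t x‖ₑ ^ α)) := by
          have := hm₁t t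
          rw [lintegral_const_mul' _ _ (by simp), lintegral_add_left (by fun_prop)]
      _ ≤ _ := by
          gcongr
          · exact (hnl _ (hm₁t t)).trans (by gcongr)
          · exact (hnl _ (hm₂t t)).trans (by gcongr)
  set D : ℝ≥0∞ := (ENNReal.ofReal (2 ^ |s|) * B₁) ^ (α - 1) +
      (ENNReal.ofReal (2 ^ |s|) * B₂) ^ (α - 1) with hD
  have hDt : D ≠ ⊤ := by
    refine ENNReal.add_ne_top.2 ⟨?_, ?_⟩
    · exact ENNReal.rpow_ne_top_of_nonneg hα1.le
        (ENNReal.mul_ne_top ENNReal.ofReal_ne_top hb₁.ne)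
    · exact ENNReal.rpow_ne_top_of_nonneg hα1.le
        (ENNReal.mul_ne_top ENNReal.ofReal_ne_top hb₂.ne)
  have h_intg : ∀ᵐ t ∂μ, h t ≤ (ENNReal.ofReal α * (Cp * D)) *
      ∫⁻ τ in Set.Ioo (0 : ℝ) t, ENNReal.ofReal ((t - τ) ^ (-δ)) * h τ := by
    filter_upwards [hB₁a, hB₂a, hdu'] with t ht1 ht2 hdt
    have hW₁ : eLpNorm (fun x => ‖x‖ ^ s * u₁ t x) q volume ≤ ENNReal.ofReal (2 ^ |s|) * B₁ :=
      (herz_weighted n hn s q r hr hrt (hrα.trans hq) (u₁ t)).trans (by gcongr)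
    have hW₂ : eLpNorm (fun x => ‖x‖ ^ s * u₂ t x) q volume ≤ ENNReal.ofReal (2 ^ |s|) * B₂ :=
      (herz_weighted n hn s q r hr hrt (hrα.trans hq) (u₂ t)).trans (by gcongr)
    refine step_bound n h₁.1 h₂.1 t δ (Cp * D) (ENNReal.mul_ne_top hCp hDt) ?_ hdt
    intro τ hτ y
    have htz : 0 < t - τ := sub_pos.2 hτ.2
    calc _ ≤ Cp * ENNReal.ofReal ((t - τ) ^ (-δ)) * (ENNReal.ofReal (2 ^ |s|) * B₁) ^ (α - 1) +
          Cp * ENNReal.ofReal ((t - τ) ^ (-δ)) * (ENNReal.ofReal (2 ^ |s|) * B₂) ^ (α - 1) := by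
          refine add_le_add ?_ ?_
          · exact (hpot (u₁ t) (hm₁t t) _ htz y).trans
              (mul_le_mul_right (ENNReal.rpow_le_rpow hW₁ hα1.le) _)
          · exact (hpot (u₂ t) (hm₂t t) _ htz y).trans
              (mul_le_mul_right (ENNReal.rpow_le_rpow hW₂ hα1.le) _)
      _ = _ := by rw [hD]; ring
  have hzero : ∀ᵐ t ∂μ, h t = 0 := by
    refine sing_gronwall hδ1 h _ _ ?_ ?_ hbd h_intg
    · refine ENNReal.mul_ne_top (by simp) (ENNReal.add_ne_top.2 ⟨?_, ?_⟩)
      · exact ENNReal.mul_ne_top hCn (ENNReal.rpow_ne_top_of_nonneg hα0.le hb₁.ne)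
      · exact ENNReal.mul_ne_top hCn (ENNReal.rpow_ne_top_of_nonneg hα0.le hb₂.ne)
    · exact ENNReal.mul_ne_top ENNReal.ofReal_ne_top (ENNReal.mul_ne_top hCp hDt)
  have hzero' : ∀ᵐ t, t ∈ Set.Ioo (0 : ℝ) T → h t = 0 :=
    (ae_restrict_iff' measurableSet_Ioo).1 hzero
  filter_upwards [hdu, fst_mem n T] with p hp hpT
  have hz : ∫⁻ z, ENNReal.ofReal (heatKernel n (p.1 - z.1) p.2 z.2) * g z
          ∂((volume.restrict (Set.Ioo (0 : ℝ) p.1)).prod volume) = 0 := by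
    have hKm : Measurable (fun z : ℝ × Euc n =>
        ENNReal.ofReal (heatKernel n (p.1 - z.1) p.2 z.2)) := by
      unfold heatKernel; fun_prop
    have hKg : Measurable (fun z : ℝ × Euc n =>
        ENNReal.ofReal (heatKernel n (p.1 - z.1) p.2 z.2) * g z) := hKm.mul hgm
    rw [lintegral_prod _ hKg.aemeasurable]
    refine (lintegral_congr_ae (g := fun _ => 0) ?_).trans lintegral_zero
    filter_upwards [ae_restrict_of_ae hzero', ae_restrict_mem measurableSet_Ioo] with τ h1 h2
    have h3 := h1 ⟨h2.1, h2.2.trans hpT.2⟩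
    have hgτ : Measurable (fun x => g (τ, x)) := hgm.comp measurable_prodMk_left
    rw [hh] at h3
    simp only at h3
    rw [lintegral_eq_zero_iff hgτ] at h3
    refine (lintegral_congr_ae (g := fun _ => 0) ?_).trans lintegral_zero
    filter_upwards [h3] with x hx
    simp only [Pi.zero_apply] at hx
    simp [hx]
  rw [hz, mul_zero, nonpos_iff_eq_zero, enorm_eq_zero, sub_eq_zero] at hp
  exact hp
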